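/- Let p be a prime, s a positive integer, q = p^s, n ≥ 2, and m = (n-1)q + 1. Then the wreath product UT_n(F_p) ≀ C_q of the unitriangular group UT_n(F_p) with the cyclic group C_q of order q embeds in UT_m(F_p); that is, there exists an injective group homomorphism from UT_n(F_p) ≀ C_q into UT_m(F_p). -/

import Mathlib

open Matrix

/-- An `n × n` matrix is *unitriangular* if it is upper triangular with all
diagonal entries equal to `1`. -/
def IsUnitriangular {n : ℕ} {R : Type*} [CommRing R]
    (M : Matrix (Fin n) (Fin n) R) : Prop :=
  M.BlockTriangular id ∧ ∀ i, M i i = 1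

lemma isUnitriangular_one {n : ℕ} {R : Type*} [CommRing R] :
    IsUnitriangular (1 : Matrix (Fin n) (Fin n) R) :=
  ⟨blockTriangular_one, fun i => by simp⟩

lemma IsUnitriangular.mul {n : ℕ} {R : Type*} [CommRing R]
    {A B : Matrix (Fin n) (Fin n) R} (hA : IsUnitriangular A)
    (hB : IsUnitriangular B) : IsUnitriangular (A * B) := by
  refine ⟨hA.1.mul hB.1, fun i => ?_⟩
  rw [mul_apply, Finset.sum_eq_single i]
  · rw [hA.2, hB.2, one_mul]
  · intro j _ hj
    rcases lt_or_gt_of_ne hj with h | h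
    · rw [hA.1 (show id j < id i from h), zero_mul]
    · rw [hB.1 (show id i < id j from h), mul_zero]
  · intro h; exact absurd (Finset.mem_univ i) h

/-- The group `UT_n(F_p)` of upper unitriangular `n × n` matrices over the field
`F_p = ZMod p`, realized as a subgroup of the group of units of the matrix ring. -/
def UT (p n : ℕ) [Fact p.Prime] : Subgroup (Matrix (Fin n) (Fin n) (ZMod p))ˣ where
  carrier := {M | IsUnitriangular (M : Matrix (Fin n) (Fin n) (ZMod p))}
  one_mem' := isUnitriangular_one
  mul_mem' := fun ha hb => ha.mul hb
  inv_mem' := by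
    intro x hx
    have hpow : ∀ k : ℕ,
        IsUnitriangular ((x ^ k : (Matrix (Fin n) (Fin n) (ZMod p))ˣ) :
          Matrix (Fin n) (Fin n) (ZMod p)) := by
      intro k
      induction k with
      | zero => simpa using isUnitriangular_one
      | succ k ih => rw [pow_succ, Units.val_mul]; exact ih.mul hx
    have hinv : x⁻¹ = x ^ (orderOf x - 1) := by
      refine inv_eq_of_mul_eq_one_right ?_
      rw [← pow_succ', Nat.sub_add_cancel (orderOf_pos x)]
      exact pow_orderOf_eq_one x
    show IsUnitriangular ((x⁻¹ : (Matrix (Fin n) (Fin n) (ZMod p))ˣ) :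
      Matrix (Fin n) (Fin n) (ZMod p))
    rw [hinv]
    exact hpow _

/-- The cyclic shift automorphism of the base group `ZMod q → G`:
`(f^c)(t) = f (t - c)`. -/
def shiftAut (q : ℕ) (G : Type*) [Group G] (c : ZMod q) : MulAut (ZMod q → G) where
  toFun f := fun t => f (t - c)
  invFun f := fun t => f (t + c)
  left_inv f := by funext t; simp
  right_inv f := by funext t; simp
  map_mul' f g := rfl

/-- The action of the cyclic group `C_q = ZMod q` on the base group `ZMod q → G`
by cyclic shifts. -/
def shiftHom (q : ℕ) (G : Type*) [Group G] :
    Multiplicative (ZMod q) →* MulAut (ZMod q → G) where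
  toFun c := shiftAut q G c.toAdd
  map_one' := by
    refine MulEquiv.ext fun f => funext fun t => ?_
    simp [shiftAut]
  map_mul' c d := by
    refine MulEquiv.ext fun f => funext fun t => ?_
    simp [shiftAut, MulAut.mul_apply, sub_sub]

/-- The wreath product `G ≀ C_q` of a group `G` with the cyclic group of order `q`. -/
abbrev WreathCyclic (G : Type*) [Group G] (q : ℕ) :=
  (ZMod q → G) ⋊[shiftHom q G] Multiplicative (ZMod q)

/-- The diagonal embedding of `G` into the base group of `G ≀ C_q`. -/
def diagEmbed (G : Type*) [Group G] (q : ℕ) : G →* WreathCyclic G q :=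
  SemidirectProduct.inl.comp (Pi.constMonoidHom (ZMod q) G)

/-!
Let `R` have characteristic `p`, let `q = p ^ s`, and let `G` act on a free `R`-module `U`,
unitriangularly in the basis `e₁, …, eₙ`. Then `G ≀ C_q` acts on the functions `ZMod q → U`, and
it acts unitriangularly in the lexicographically ordered basis of functions
`t ↦ (t choose d) • eᵢ` with `1 ≤ i ≤ n` and `0 ≤ d < q`. Indeed `t ↦ (t choose d)` is well
defined on `ZMod q` since `(q choose k)` vanishes in `R` for `0 < k < q`, and by Vandermonde's
identity a shift changes it only by a combination of the functions `t ↦ (t choose k)` with `k < d`.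

The first `(n - 1) * q + 1` of these functions already suffice for a faithful representation: the
constant functions `eᵢ`, the last of which is `eₙ`, detect the base group, and the functions
`t ↦ (t choose d) • e₁` detect the shift.
-/

open Module Submodule

section UnitriangularGroup

variable {R : Type*} [CommRing R] {n : ℕ}

lemma mul_apply_self_of_isUpperTriangular {S m : Type*} [NonUnitalNonAssocSemiring S] [Fintype m]
    [LinearOrder m] {A B : Matrix m m S} (hA : A.IsUpperTriangular) (hB : B.IsUpperTriangular)
    (i : m) : (A * B) i i = A i i * B i i := by
  rw [mul_apply, Finset.sum_eq_single i]
  · intro j _ hj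
    rcases lt_or_gt_of_ne hj with h | h
    · rw [hA (show id j < id i from h), zero_mul]
    · rw [hB (show id i < id j from h), mul_zero]
  · exact fun h => absurd (Finset.mem_univ i) h

lemma IsUnitriangular.units_inv {x : (Matrix (Fin n) (Fin n) R)ˣ}
    (hx : IsUnitriangular (x : Matrix (Fin n) (Fin n) R)) :
    IsUnitriangular (x⁻¹.1 : Matrix (Fin n) (Fin n) R) := by
  have hinv : (x⁻¹.1 : Matrix (Fin n) (Fin n) R).IsUpperTriangular := by
    have : Invertible (x : Matrix (Fin n) (Fin n) R) := x.invertible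
    rw [coe_units_inv]
    exact blockTriangular_inv_of_blockTriangular hx.1
  refine ⟨hinv, fun i => ?_⟩
  have h := mul_apply_self_of_isUpperTriangular hx.1 hinv i
  rw [x.mul_inv, one_apply_eq, hx.2, one_mul] at h
  exact h.symm

/-- The group `UT_n(R)` over an arbitrary commutative ring `R`. It is realized inside the units of
the matrix ring, like `UT p n`, which is definitionally the case `R = ZMod p`. -/
def unitriangularGroup (n : ℕ) (R : Type*) [CommRing R] : Subgroup (Matrix (Fin n) (Fin n) R)ˣ where
  carrier := {M | IsUnitriangular (M : Matrix (Fin n) (Fin n) R)}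
  one_mem' := isUnitriangular_one
  mul_mem' := fun ha hb => ha.mul hb
  inv_mem' := fun hx => hx.units_inv

variable {V : Type*} [AddCommGroup V] [Module R V]

lemma isUnitriangular_toMatrix_iff (b : Basis (Fin n) R V) (f : End R V) :
    IsUnitriangular (LinearMap.toMatrix b b f) ↔
      ∀ j, f (b j) - b j ∈ span R (b '' Set.Iio j) := by
  have hrepr (i j : Fin n) : b.repr (f (b j) - b j) i =
      LinearMap.toMatrix b b f i j - (1 : Matrix (Fin n) (Fin n) R) i j := by
    rw [← LinearMap.toMatrix_id b, LinearMap.toMatrix_apply, LinearMap.toMatrix_apply, map_sub]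
    rfl
  have hspan (j : Fin n) : f (b j) - b j ∈ span R (b '' Set.Iio j) ↔
      ∀ i, j ≤ i → LinearMap.toMatrix b b f i j = (1 : Matrix (Fin n) (Fin n) R) i j := by
    simp only [b.mem_span_image, Set.subset_def, Finset.mem_coe, Finsupp.mem_support_iff, hrepr,
      Set.mem_Iio, sub_ne_zero, ne_eq, not_imp_comm (b := _ < _), not_lt]
  simp only [hspan]
  constructor
  · intro h j i hij
    rcases hij.eq_or_lt with rfl | hlt
    · rw [h.2, one_apply_eq]
    · rw [h.1 (show id j < id i from hlt), one_apply_ne hlt.ne']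
  · exact fun h => ⟨fun i j hji => (h j i hji.le).trans (one_apply_ne hji.ne'),
      fun i => (h i i le_rfl).trans (one_apply_eq i)⟩

end UnitriangularGroup

section UnitriangularRep

variable {R G V ι κ : Type*} [CommRing R] [Monoid G] [AddCommGroup V] [Module R V]
  {ρ : Representation R G V} {v : ι → V}

/-- The action `ρ` is unitriangular with respect to the ordered family `v`: every `ρ g` fixes each
`v i` modulo the span of the earlier members. The family need not span `V`, so that the notion also
describes how `ρ` acts on the flag of an invariant submodule. -/
def IsUnitriangularRep [Preorder ι] (ρ : Representation R G V) (v : ι → V) : Prop :=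
  ∀ g i, ρ g (v i) - v i ∈ span R (v '' Set.Iio i)

lemma IsUnitriangularRep.comp [Preorder ι] [Preorder κ] (hρ : IsUnitriangularRep ρ v) {f : κ → ι}
    (hf : ∀ k, f '' Set.Iio k = Set.Iio (f k)) : IsUnitriangularRep ρ (v ∘ f) := fun g k => by
  rw [Set.image_comp, hf]
  exact hρ g (f k)

lemma IsUnitriangularRep.span_le_comap [Preorder ι] (hρ : IsUnitriangularRep ρ v) (g : G) :
    span R (Set.range v) ≤ (span R (Set.range v)).comap (ρ g) := by
  rw [span_le]
  rintro _ ⟨i, rfl⟩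
  exact (sub_mem_iff_left _ (subset_span (Set.mem_range_self i))).1
    (span_mono (Set.image_subset_range v _) (hρ g i))

lemma IsUnitriangularRep.subrepresentation [Preorder ι] (hρ : IsUnitriangularRep ρ v)
    (hv : LinearIndependent R v) :
    IsUnitriangularRep (ρ.subrepresentation _ hρ.span_le_comap) (Basis.span hv) := fun g i => by
  have himage : (span R (Set.range v)).subtype '' (Basis.span hv '' Set.Iio i) =
      v '' Set.Iio i := by
    rw [← Set.image_comp]
    exact Set.image_congr fun j _ => congrArg Subtype.val (Basis.span_apply hv j)
  rw [← comap_map_eq_of_injective (injective_subtype (span R (Set.range v))) (span R _), mem_comap,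
    map_span, himage]
  simpa [Basis.span_apply] using hρ g i

end UnitriangularRep

section Embedding

variable {R G V : Type*} [CommRing R] [Group G] [AddCommGroup V] [Module R V]
  {ρ : Representation R G V} {m : ℕ}

lemma exists_injective_hom_unitriangularGroup_of_basis {b : Basis (Fin m) R V}
    (hρ : IsUnitriangularRep ρ b) (hinj : Function.Injective ρ) :
    ∃ τ : G →* unitriangularGroup m R, Function.Injective τ := by
  let σ : G →* Matrix (Fin m) (Fin m) R := (LinearMap.toMatrixAlgEquiv b : End R V →* _).comp ρ
  refine ⟨σ.toHomUnits.codRestrict (unitriangularGroup m R)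
    fun g => (isUnitriangular_toMatrix_iff b (ρ g)).2 (hρ g), fun g h hgh => hinj ?_⟩
  exact (LinearMap.toMatrixAlgEquiv b).injective
    (congrArg (fun x : unitriangularGroup m R => (x.1 : Matrix (Fin m) (Fin m) R)) hgh)

lemma exists_injective_hom_unitriangularGroup {v : Fin m → V}
    (hρ : IsUnitriangularRep ρ v) (hv : LinearIndependent R v)
    (hfix : ∀ g, (∀ i, ρ g (v i) = v i) → g = 1) :
    ∃ τ : G →* unitriangularGroup m R, Function.Injective τ := by
  refine exists_injective_hom_unitriangularGroup_of_basis (hρ.subrepresentation hv)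
    ((injective_iff_map_eq_one _).2 fun g hg => hfix g fun i => ?_)
  exact congrArg Subtype.val (LinearMap.congr_fun hg ⟨v i, subset_span ⟨i, rfl⟩⟩)

end Embedding

section NaturalRep

variable (n : ℕ) (R : Type*) [CommRing R]

/-- The natural representation of `UT_n(R)` on column vectors. -/
def unitriangularGroupRep : Representation R (unitriangularGroup n R) (Fin n → R) :=
  ((toLinAlgEquiv' : Matrix (Fin n) (Fin n) R ≃ₐ[R] _) : _ →* End R (Fin n → R)).comp
    ((Units.coeHom _).comp (unitriangularGroup n R).subtype)

lemma unitriangularGroupRep_injective :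
    Function.Injective (unitriangularGroupRep n R) :=
  toLinAlgEquiv'.injective.comp (Units.val_injective.comp Subtype.val_injective)

lemma isUnitriangularRep_unitriangularGroupRep :
    IsUnitriangularRep (unitriangularGroupRep n R) (Pi.basisFun R (Fin n)) := fun M => by
  refine (isUnitriangular_toMatrix_iff (Pi.basisFun R (Fin n)) (unitriangularGroupRep n R M)).1 ?_
  have hmatrix : LinearMap.toMatrix' (unitriangularGroupRep n R M) = M.1 :=
    LinearMap.toMatrix'_toLin' _
  rw [LinearMap.toMatrix_eq_toMatrix', hmatrix]
  exact M.2

end NaturalRep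

section BinomialFun

variable (R : Type*) [CommRing R]

/-- The binomial function `t ↦ (t choose d)` on `ZMod q`, evaluated at the representative of `t` in
`{0, …, q - 1}`. For `q = p ^ s`, `d < q` and coefficients of characteristic `p` the choice of
representative does not matter (`binomialFun_natCast`). -/
def binomialFun (q d : ℕ) (t : ZMod q) : R := (t.val.choose d : R)

variable {R}

lemma span_range_binomialFun (q : ℕ) [NeZero q] :
    span R (Set.range fun d : Fin q => binomialFun R q d) = ⊤ := by
  refine eq_top_iff'.2 fun φ => ?_
  have hnewton : φ = ∑ d : Fin q, (fwdDiff 1)^[d] φ 0 • binomialFun R q d := by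
    funext t
    have h := shift_eq_sum_fwdDiff_iter 1 φ t.val 0
    rw [zero_add, nsmul_one, ZMod.natCast_zmod_val,
      Finset.sum_subset (Finset.range_subset_range.2 (Nat.succ_le_of_lt t.val_lt))] at h
    · rw [h, Finset.sum_apply, Finset.sum_range]
      simp [binomialFun, mul_comm]
    · intro d _ hd
      rw [Nat.choose_eq_zero_of_lt (by simpa using hd), zero_smul]
  rw [hnewton]
  exact sum_mem fun d _ => smul_mem _ _ (subset_span ⟨d, rfl⟩)

variable {p s d : ℕ} [Fact p.Prime] [CharP R p]

lemma natCast_choose_periodic (hd : d < p ^ s) :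
    Function.Periodic (fun a : ℕ => (a.choose d : R)) (p ^ s) := fun a => by
  have hvanish (k : ℕ) (hk : k < d) : ((p ^ s).choose (d - k) : R) = 0 :=
    (CharP.cast_eq_zero_iff R p _).2
      ((Fact.out : p.Prime).dvd_choose_pow (by omega) (by omega))
  change ((a + p ^ s).choose d : R) = a.choose d
  rw [Nat.add_choose_eq, Finset.Nat.sum_antidiagonal_eq_sum_range_succ_mk, Finset.sum_range_succ,
    Nat.sub_self, Nat.choose_zero_right, mul_one, Nat.cast_add, Nat.cast_sum, Finset.sum_eq_zero,
    zero_add]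
  intro k hk
  rw [Nat.cast_mul, hvanish k (Finset.mem_range.1 hk), mul_zero]

lemma binomialFun_natCast (hd : d < p ^ s) (a : ℕ) :
    binomialFun R (p ^ s) d a = (a.choose d : R) := by
  rw [binomialFun, ZMod.val_natCast]
  exact (natCast_choose_periodic hd).map_mod_nat a

lemma binomialFun_add (hd : d < p ^ s) (t c : ZMod (p ^ s)) :
    binomialFun R (p ^ s) d (t + c) =
      ∑ k ∈ Finset.range (d + 1), binomialFun R (p ^ s) k t * binomialFun R (p ^ s) (d - k) c := by
  conv_lhs => rw [← ZMod.natCast_zmod_val t, ← ZMod.natCast_zmod_val c, ← Nat.cast_add,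
    binomialFun_natCast hd, Nat.add_choose_eq, Finset.Nat.sum_antidiagonal_eq_sum_range_succ_mk]
  push_cast
  rfl

lemma binomialFun_shift_sub_mem_span (d : Fin (p ^ s)) (c : ZMod (p ^ s)) :
    (fun t => binomialFun R (p ^ s) d (t - c)) - binomialFun R (p ^ s) d ∈
      span R ((fun k : Fin (p ^ s) => binomialFun R (p ^ s) k) '' Set.Iio d) := by
  have hshift : (fun t => binomialFun R (p ^ s) d (t - c)) - binomialFun R (p ^ s) d =
      ∑ k ∈ Finset.range d, binomialFun R (p ^ s) (d - k) (-c) • binomialFun R (p ^ s) k := by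
    funext t
    rw [Pi.sub_apply, sub_eq_add_neg t, binomialFun_add d.2, Finset.sum_range_succ]
    simp [binomialFun, mul_comm]
  rw [hshift]
  refine sum_mem fun k hk => smul_mem _ _ (subset_span ?_)
  have hkd := Finset.mem_range.1 hk
  exact ⟨⟨k, hkd.trans d.2⟩, hkd, rfl⟩

end BinomialFun

section WreathRep

variable {R G U ι : Type*} [CommRing R] [Group G] [AddCommGroup U] [Module R U]

/-- The representation of `G ≀ C_q` on the functions `ZMod q → U` induced from a representation of
`G` on `U`: the base group acts pointwise and `C_q` by shifts. -/
def wreathRep (ρ : Representation R G U) (q : ℕ) :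
    Representation R (WreathCyclic G q) (ZMod q → U) where
  toFun g :=
    { toFun u t := ρ (g.left t) (u (t - g.right.toAdd))
      map_add' _ _ := funext fun _ => map_add _ _ _
      map_smul' c u := funext fun t => map_smul _ c (u _) }
  map_one' := by
    refine LinearMap.ext fun u => funext fun t => ?_
    simp
  map_mul' g h := by
    refine LinearMap.ext fun u => funext fun t => ?_
    simp [shiftHom, shiftAut, sub_sub]

lemma wreathRep_apply (ρ : Representation R G U) {q : ℕ} (g : WreathCyclic G q) (u : ZMod q → U)
    (t : ZMod q) : wreathRep ρ q g u t = ρ (g.left t) (u (t - g.right.toAdd)) := rfl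

variable (R) in
/-- The functions `t ↦ (t choose d) • e i` on `ZMod q`, for `(i, d)` in lexicographic order. They
provide the flag preserved by `wreathRep`. -/
def binomialFamily (q : ℕ) (e : ι → U) (x : ι ×ₗ Fin q) (t : ZMod q) : U :=
  binomialFun R q (ofLex x).2 t • e (ofLex x).1

lemma smul_mem_span_binomialFamily {q : ℕ} (e : ι → U) (i : ι) {D : Set (Fin q)}
    {φ : ZMod q → R} (hφ : φ ∈ span R ((fun d : Fin q => binomialFun R q d) '' D)) :
    (fun t => φ t • e i) ∈
      span R (binomialFamily R q e '' {x | (ofLex x).1 = i ∧ (ofLex x).2 ∈ D}) := by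
  have h := mem_map_of_mem (f := (LinearMap.toSpanSingleton R U (e i)).compLeft (ZMod q)) hφ
  rw [map_span, ← Set.image_comp] at h
  refine span_mono ?_ h
  rintro _ ⟨d, hd, rfl⟩
  exact ⟨toLex (i, d), ⟨rfl, hd⟩, rfl⟩

lemma mem_span_binomialFamily {q : ℕ} [NeZero q] {e : ι → U} {A : Set ι} {w : ZMod q → U}
    (hw : ∀ t, w t ∈ span R (e '' A)) :
    w ∈ span R (binomialFamily R q e '' {x | (ofLex x).1 ∈ A}) := by
  have hsingle (t : ZMod q) : span R (e '' A) ≤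
      (span R (binomialFamily R q e '' {x | (ofLex x).1 ∈ A})).comap
        (LinearMap.single R (fun _ => U) t) := by
    rw [span_le]
    rintro _ ⟨i, hi, rfl⟩
    have hmem := smul_mem_span_binomialFamily e i (D := Set.univ) (φ := Pi.single t (1 : R))
      (by rw [Set.image_univ, span_range_binomialFun]; exact mem_top)
    have hdelta : (fun t' => (Pi.single t 1 : ZMod q → R) t' • e i) =
        LinearMap.single R (fun _ => U) t (e i) := by
      funext t'
      rcases eq_or_ne t' t with rfl | ht <;> simp [*]
    rw [hdelta] at hmem
    refine span_mono (Set.image_mono fun x hx => ?_) hmem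
    exact (hx.1 ▸ hi : (ofLex x).1 ∈ A)
  rw [← Finset.univ_sum_single w]
  exact sum_mem fun t _ => hsingle t (hw t)

lemma linearIndependent_binomialFamily [Finite ι] {q : ℕ} [NeZero q] (e : Basis ι R U) :
    LinearIndependent R (binomialFamily R q e) := by
  have := Fintype.ofFinite ι
  have := Module.Free.of_basis e
  have := Module.Finite.of_basis e
  nontriviality R
  refine linearIndependent_of_top_le_span_of_card_eq_finrank (fun w _ => ?_) ?_
  · simpa using mem_span_binomialFamily (A := Set.univ) (w := w) (fun t => by simp [e.span_eq])
  · simp [Module.finrank_pi_fintype, Module.finrank_eq_card_basis e, ZMod.card, mul_comm]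

lemma IsUnitriangularRep.wreathRep_binomialFamily {p s : ℕ} [Fact p.Prime] [CharP R p] [Preorder ι]
    {ρ : Representation R G U} {e : ι → U} (hρ : IsUnitriangularRep ρ e) :
    IsUnitriangularRep (wreathRep ρ (p ^ s)) (binomialFamily R (p ^ s) e) := fun g x => by
  obtain ⟨i, d⟩ := x
  let φ : ZMod (p ^ s) → R := fun t => binomialFun R (p ^ s) d (t - g.right.toAdd)
  have hsplit : wreathRep ρ (p ^ s) g (binomialFamily R (p ^ s) e (toLex (i, d))) -
      binomialFamily R (p ^ s) e (toLex (i, d)) =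
      (fun t => φ t • (ρ (g.left t) (e i) - e i)) +
        fun t => (φ - binomialFun R (p ^ s) d) t • e i := by
    funext t
    simp [wreathRep_apply, binomialFamily, φ, smul_sub, sub_smul]
  have hcoord := mem_span_binomialFamily (w := fun t => φ t • (ρ (g.left t) (e i) - e i))
    fun t => smul_mem _ (φ t) (hρ (g.left t) i)
  have hshift := smul_mem_span_binomialFamily e i
    (binomialFun_shift_sub_mem_span (R := R) d g.right.toAdd)
  refine hsplit ▸ add_mem (span_mono (Set.image_mono fun x hx => ?_) hcoord)
    (span_mono (Set.image_mono fun x hx => ?_) hshift)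
  · exact Prod.Lex.lt_iff.2 (.inl hx)
  · exact Prod.Lex.lt_iff.2 (.inr hx)

lemma eq_one_of_wreathRep_binomialFamily_eq {q : ℕ} [NeZero q] {ρ : Representation R G U}
    {e : ι → U} (hfix : ∀ g, (∀ i, ρ g (e i) = e i) → g = 1)
    {g : WreathCyclic G q} {j : ι} (hne : e j ≠ 0)
    (hconst : ∀ i, wreathRep ρ q g (binomialFamily R q e (toLex (i, 0))) =
      binomialFamily R q e (toLex (i, 0)))
    (hj : ∀ d, wreathRep ρ q g (binomialFamily R q e (toLex (j, d))) =
      binomialFamily R q e (toLex (j, d))) :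
    g = 1 := by
  have hleft : g.left = 1 := funext fun t => hfix _ fun i => by
    simpa [wreathRep_apply, binomialFamily, binomialFun] using congrFun (hconst i) t
  refine SemidirectProduct.ext hleft (Multiplicative.toAdd.injective ?_)
  by_contra hc
  change g.right.toAdd ≠ 0 at hc
  have hval : 0 < g.right.toAdd.val := Nat.pos_of_ne_zero ((ZMod.val_ne_zero _).2 hc)
  -- At `c` the function `t ↦ (t choose c)` is `1`, while its shift by `c` is `(0 choose c) = 0`.
  have h := congrFun (hj ⟨g.right.toAdd.val, ZMod.val_lt _⟩) g.right.toAdd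
  exact hne (by simpa [wreathRep_apply, binomialFamily, binomialFun, hleft,
    Nat.choose_eq_zero_of_lt hval] using h.symm)

lemma card_Iic_toLex_top_zero [Fintype ι] [LinearOrder ι] [OrderTop ι] (q : ℕ) [NeZero q] :
    Nat.card (Set.Iic (toLex ((⊤ : ι), (0 : Fin q)))) = (Fintype.card ι - 1) * q + 1 := by
  have hIic : Set.Iic (toLex ((⊤ : ι), (0 : Fin q))) = toLex ''
      ((insert (⊤, 0) (Finset.univ.erase ⊤ ×ˢ Finset.univ) : Finset (ι × Fin q)) : Set _) := by
    ext x
    rw [Equiv.image_eq_preimage_symm]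
    simp [Prod.Lex.le_iff, Prod.ext_iff, lt_top_iff_ne_top, or_comm]
  rw [hIic, Nat.card_image_of_injective toLex.injective, Nat.card_coe_set_eq, Set.ncard_coe_finset,
    Finset.card_insert_of_notMem (by simp), Finset.card_product,
    Finset.card_erase_of_mem (Finset.mem_univ _), Finset.card_univ, Finset.card_univ,
    Fintype.card_fin]

theorem exists_injective_hom_wreathCyclic {p : ℕ} [Fact p.Prime] [CharP R p] (s : ℕ)
    [Fintype ι] [LinearOrder ι] [OrderTop ι] [Nontrivial ι] {ρ : Representation R G U}
    {e : Basis ι R U} (hρ : IsUnitriangularRep ρ e) (hinj : Function.Injective ρ) :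
    ∃ τ : WreathCyclic G (p ^ s) →* unitriangularGroup ((Fintype.card ι - 1) * p ^ s + 1) R,
      Function.Injective τ := by
  have : Nontrivial R := CharP.nontrivial_of_char_ne_one (Fact.out : p.Prime).ne_one
  let last : ι ×ₗ Fin (p ^ s) := toLex (⊤, 0)
  have := Fintype.ofFinite (Set.Iic last)
  let f := monoEquivOfFin (Set.Iic last)
    (Nat.card_eq_fintype_card.symm.trans (card_Iic_toLex_top_zero _))
  refine exists_injective_hom_unitriangularGroup (v := binomialFamily R (p ^ s) e ∘ Subtype.val ∘ f)
    (hρ.wreathRep_binomialFamily.comp fun k => ?_)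
    ((linearIndependent_binomialFamily e).comp _ (Subtype.val_injective.comp f.injective))
    fun g hg => ?_
  · rw [Set.image_comp, f.image_Iio, Set.image_subtype_val_Iic_Iio, Function.comp_apply]
  have hfix (x) (hx : x ≤ last) : wreathRep ρ (p ^ s) g (binomialFamily R (p ^ s) e x) =
      binomialFamily R (p ^ s) e x := by
    simpa using hg (f.symm ⟨x, hx⟩)
  obtain ⟨j, hj⟩ := exists_ne (⊤ : ι)
  refine eq_one_of_wreathRep_binomialFamily_eq ?_ (e.ne_zero j)
    (fun i => hfix _ ?_) (fun d => hfix _ ?_)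
  · exact fun g hg => hinj (by rw [map_one]; exact e.ext hg)
  · exact Prod.Lex.toLex_mono ⟨le_top, le_rfl⟩
  · exact Prod.Lex.toLex_le_toLex.2 (.inl hj.lt_top)

end WreathRep

theorem wreath_product_embeds_general (p s n : ℕ) [Fact p.Prime] (R : Type*) [CommRing R]
    [CharP R p] (hn : 2 ≤ n) :
    ∃ τ : WreathCyclic (unitriangularGroup n R) (p ^ s) →*
      unitriangularGroup ((n - 1) * p ^ s + 1) R, Function.Injective τ := by
  have : NeZero n := ⟨by omega⟩
  have : Nontrivial (Fin n) := Fin.nontrivial_iff_two_le.2 hn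
  have h := exists_injective_hom_wreathCyclic s (isUnitriangularRep_unitriangularGroupRep n R)
    (unitriangularGroupRep_injective n R)
  rwa [Fintype.card_fin] at h

/-- The wreath product `UT_n(F_p) ≀ C_{p^s}` embeds in `UT_m(F_p)`, `m = (n-1)p^s + 1`. -/
theorem wreath_product_embeds (p s n : ℕ) [Fact p.Prime] (hs : 0 < s) (hn : 2 ≤ n) :
    ∃ τ : WreathCyclic (UT p n) (p ^ s) →* UT p ((n - 1) * p ^ s + 1),
      Function.Injective τ :=
  wreath_product_embeds_general p s n (ZMod p) hn
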